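/- Let R be a regular domain with a generalized regular system of parameters x = x_1,…,x_p, and let I ⊆ R be an ideal. Then Γ_x(I) = Γ_x(I̅) = Γ_x(I_0), where I̅ is the integral closure of I and I_0 is the ideal generated by the monomials x^a with a ∈ Γ_x(I) ∩ ℤ_{≥0}^p. -/

import Mathlib

open Ideal Set Pointwise

noncomputable section

namespace NND

variable {R : Type*} [CommRing R] {p : ℕ}

/-- The monomial `x^a = x 0 ^ a 0 * ⋯` in the elements `x`. -/
def mono (x : Fin p → R) (a : Fin p → ℕ) : R := ∏ i, x i ^ a i

/-- A (commutative) ring is regular local if it is Noetherian local and its maximal ideal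
can be generated by `dim R` elements. -/
def IsRegularLocal (A : Type*) [CommRing A] : Prop :=
  IsNoetherianRing A ∧ ∃ h : IsLocalRing A, ∃ s : Finset A,
    Ideal.span (s : Set A) = @IsLocalRing.maximalIdeal A _ h ∧
    (s.card : WithBot (WithTop ℕ)) = ringKrullDim A

/-- A regular domain: an integral domain whose localization at every prime is regular local. -/
def IsRegularDomain (A : Type*) [CommRing A] : Prop :=
  IsDomain A ∧ ∀ (P : Ideal A) (hP : P.IsPrime), IsRegularLocal (@Localization.AtPrime A _ P hP)

/-- `x` is a regular sequence. -/
def IsRegSeq (x : Fin p → R) : Prop :=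
  Ideal.span (Set.range x) ≠ ⊤ ∧
  ∀ i : Fin p, ∀ r : R, r * x i ∈ Ideal.span (x '' {j | j < i}) →
    r ∈ Ideal.span (x '' {j | j < i})

/-- A generalized regular system of parameters: a permutable regular sequence all of whose
subquotients are regular domains. -/
def IsGRSOP (x : Fin p → R) : Prop :=
  (∀ σ : Equiv.Perm (Fin p), IsRegSeq (x ∘ σ)) ∧
  ∀ S : Set (Fin p), IsRegularDomain (R ⧸ Ideal.span (x '' S))

/-- `A` is the exponent set of a monomial representation of `f`:
`h * f = ∑_{a ∈ A} r a * x^a` with `h` and the `r a` outside `(x_1, …, x_p)`. -/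
def IsMonRep (x : Fin p → R) (f : R) (A : Finset (Fin p → ℕ)) : Prop :=
  ∃ (h : R) (r : (Fin p → ℕ) → R),
    h ∉ Ideal.span (Set.range x) ∧ (∀ a ∈ A, r a ∉ Ideal.span (Set.range x)) ∧
    h * f = ∑ a ∈ A, r a * mono x a

/-- A minimal (irredundant) monomial representation: no monomial divides another. -/
def IsMinMonRep (x : Fin p → R) (f : R) (A : Finset (Fin p → ℕ)) : Prop :=
  IsMonRep x f A ∧ ∀ a ∈ A, ∀ b ∈ A, a ≠ b → ¬ mono x a ∣ mono x b

open Classical in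
/-- The support of `f`: the exponent set of its (unique) minimal monomial representation. -/
def supp (x : Fin p → R) (f : R) : Set (Fin p → ℕ) :=
  if h : ∃ A : Finset (Fin p → ℕ), IsMinMonRep x f A then ↑h.choose else ∅

/-- Embedding of exponent vectors into `ℝ^p`. -/
def toR (a : Fin p → ℕ) : Fin p → ℝ := fun i => (a i : ℝ)

/-- The Newton polyhedron of a set of ring elements. -/
def Γ (x : Fin p → R) (S : Set R) : Set (Fin p → ℝ) :=
  convexHull ℝ (toR '' ⋃ f ∈ S, supp x f)

/-- The Newton polyhedron `Γ_x(I)` of an ideal. -/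
def ΓI (x : Fin p → R) (I : Ideal R) : Set (Fin p → ℝ) := Γ x (I : Set R)

/-- The Newton polyhedron `Γ_x(f)` of an element: that of the principal ideal `(f)`. -/
def ΓE (x : Fin p → R) (f : R) : Set (Fin p → ℝ) := ΓI x (Ideal.span {f})

/-- The integral closure of an ideal `I`: elements satisfying an equation of integral
dependence `f^n + a_1 f^{n-1} + ⋯ + a_n = 0` with `a_i ∈ I^i`. -/
def intClosure (I : Ideal R) : Set R :=
  {f | ∃ n : ℕ, 0 < n ∧ ∃ a : ℕ → R, (∀ i ∈ Finset.Icc 1 n, a i ∈ I ^ i) ∧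
    f ^ n + ∑ i ∈ Finset.Icc 1 n, a i * f ^ (n - i) = 0}

/-- The monomial ideal `I_0` spanned by the lattice points of `Γ_x(I)`. -/
def idealZero (x : Fin p → R) (I : Ideal R) : Ideal R :=
  Ideal.span (mono x '' {a | toR a ∈ ΓI x I})

/-- The ideal `K_I` generated by the monomials lying in the integral closure of `I`. -/
def KIdeal (x : Fin p → R) (I : Ideal R) : Ideal R :=
  Ideal.span {m | (∃ a : Fin p → ℕ, m = mono x a) ∧ m ∈ intClosure I}

/-!
After localizing at the prime `(x)`, permutable regularity makes the monomials in `x` obey the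
divisibility and membership rules of a polynomial ring, and by Krull's intersection theorem every
element is a finite sum of monomials with unit coefficients; its support is the set of exponents of
such a sum without redundancies. The ideal generated by the monomials of weight at least `c`, for
nonnegative weights, is integrally closed: order monomials by weight and then lexicographically, and
note that the initial term of `f ^ n` is the `n`-th power of that of `f`, which rules out an
equation of integral dependence. As the supports of the elements of `I` form an upper set, `Γ_x(I)`
is closed, convex and an upper set, hence cut out by half-spaces with nonnegative weights. So
integral dependence on an ideal whose monomials lie in `Γ_x(I)`, such as `I` or `I_0`, never leaves
`Γ_x(I)`.
-/

section RegularSequences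

lemma mem_span_sup_of_mul_mem_span_mul_sup {K : Ideal R} {a b r : R}
    (ha : IsSMulRegular (R ⧸ K) a) (h : a * r ∈ Ideal.span {a * b} ⊔ K) :
    r ∈ Ideal.span {b} ⊔ K := by
  obtain ⟨s, k, hk, hr⟩ := Ideal.mem_span_singleton_sup.1 h
  have hmem : a * (r - s * b) ∈ K := by
    rwa [show a * (r - s * b) = k by linear_combination -hr]
  exact Ideal.mem_span_singleton_sup.2
    ⟨s, r - s * b, mem_of_isSMulRegular_quotient_of_smul_mem ha hmem, by ring⟩

lemma isSMulRegular_quotient_span_mul_sup {K : Ideal R} {a b z : R}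
    (ha : IsSMulRegular (R ⧸ K) a) (hza : IsSMulRegular (R ⧸ Ideal.span {a} ⊔ K) z)
    (hzb : IsSMulRegular (R ⧸ Ideal.span {b} ⊔ K) z) :
    IsSMulRegular (R ⧸ Ideal.span {a * b} ⊔ K) z := by
  refine (isSMulRegular_quotient_iff_mem_of_smul_mem _ _).2 fun r hr => ?_
  have hle : Ideal.span {a * b} ⊔ K ≤ Ideal.span {a} ⊔ K :=
    sup_le_sup_right (Ideal.span_singleton_le_span_singleton.2 (dvd_mul_right a b)) K
  obtain ⟨t, k, hk, rfl⟩ := Ideal.mem_span_singleton_sup.1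
    (mem_of_isSMulRegular_quotient_of_smul_mem hza (hle hr))
  have hzt : a * (z * t) ∈ Ideal.span {a * b} ⊔ K := by
    rw [smul_eq_mul, mul_add] at hr
    convert (Ideal.add_mem_iff_left _ (Ideal.mem_sup_right (K.mul_mem_left z hk))).1 hr using 1
    ring
  have ht : t ∈ Ideal.span {b} ⊔ K :=
    mem_of_isSMulRegular_quotient_of_smul_mem hzb (mem_span_sup_of_mul_mem_span_mul_sup ha hzt)
  obtain ⟨s, l, hl, rfl⟩ := Ideal.mem_span_singleton_sup.1 ht
  exact Ideal.mem_span_singleton_sup.2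
    ⟨s, l * a + k, K.add_mem (K.mul_mem_right a hl) hk, by ring⟩

/-- Permutable regularity of a family: each member is a nonzerodivisor modulo any set of
the other ones. Unlike `IsRegSeq`, this makes no reference to an order and does not ask that the
family generate a proper ideal. -/
def IsPermutablyRegular {ι : Type*} (x : ι → R) : Prop :=
  ∀ (T : Set ι) (i : ι), i ∉ T → IsSMulRegular (R ⧸ Ideal.span (x '' T)) (x i)

lemma exists_perm_image_Iio_eq {T : Set (Fin p)} {i : Fin p} (hi : i ∉ T) :
    ∃ (σ : Equiv.Perm (Fin p)) (k : Fin p), σ k = i ∧ σ '' {j | j < k} = T := by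
  classical
  obtain ⟨t, rfl⟩ := T.toFinite.exists_finset_coe
  rw [Finset.mem_coe] at hi
  have hcard : t.card < p := by simpa using Finset.card_lt_univ_of_notMem hi
  let g : Fin (t.card + 1) → Fin p := Fin.snoc (fun j => (t.equivFin.symm j : Fin p)) i
  have hg : Function.Injective g := Fin.snoc_injective_iff.2
    ⟨Subtype.val_injective.comp t.equivFin.symm.injective, by
      rintro ⟨j, rfl⟩
      exact hi (t.equivFin.symm j).2⟩
  obtain ⟨σ, hσ⟩ := Equiv.Perm.exists_extending_pair (Fin.castLE hcard) g
    (Fin.castLE_injective hcard) hg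
  refine ⟨σ, Fin.castLE hcard (Fin.last _), by simp [hσ, g], ?_⟩
  have hlt (j : Fin t.card) : σ (Fin.castLE hcard j.castSucc) = t.equivFin.symm j := by
    exact (hσ _).trans (by simp [g])
  ext k
  constructor
  · rintro ⟨j, hj, rfl⟩
    exact (hlt ⟨j, hj⟩).symm ▸ (t.equivFin.symm ⟨j, hj⟩).2
  · intro hk
    refine ⟨_, ?_, (hlt (t.equivFin ⟨k, hk⟩)).trans (by simp)⟩
    simp [Fin.lt_def]

lemma IsPermutablyRegular.of_forall_perm_isRegSeq {x : Fin p → R}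
    (hx : ∀ σ : Equiv.Perm (Fin p), IsRegSeq (x ∘ σ)) : IsPermutablyRegular x := by
  intro T i hi
  obtain ⟨σ, k, rfl, rfl⟩ := exists_perm_image_Iio_eq hi
  refine (isSMulRegular_quotient_iff_mem_of_smul_mem _ _).2 fun r hr => ?_
  rw [← Set.image_comp] at hr ⊢
  exact (hx σ).2 k r (by rwa [mul_comm])

variable {ι : Type*} {x : ι → R}

lemma span_image_update_of_mem [DecidableEq ι] (x : ι → R) {T : Set ι} {j : ι} (hj : j ∈ T)
    (v : R) : Ideal.span (Function.update x j v '' T) =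
      Ideal.span {v} ⊔ Ideal.span (x '' (T \ {j})) := by
  have hT : Function.update x j v '' (T \ {j}) = x '' (T \ {j}) :=
    Set.image_congr fun k hk => Function.update_of_ne hk.2 v x
  have himage : Function.update x j v '' T = insert v (x '' (T \ {j})) := calc
    _ = Function.update x j v '' insert j (T \ {j}) := by
      rw [Set.insert_sdiff_singleton, Set.insert_eq_of_mem hj]
    _ = _ := by rw [Set.image_insert_eq, Function.update_self, hT]
  rw [himage, Ideal.span_insert]

lemma IsPermutablyRegular.update_pow [DecidableEq ι] (hx : IsPermutablyRegular x) (j : ι) (n : ℕ) :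
    IsPermutablyRegular (Function.update x j (x j ^ n)) := by
  intro T i hi
  rcases eq_or_ne i j with rfl | hij
  · rw [Function.update_self,
      Set.image_congr fun k hk => Function.update_of_ne (ne_of_mem_of_not_mem hk hi) _ x]
    exact (hx T i hi).pow n
  rw [Function.update_of_ne hij]
  by_cases hj : j ∈ T
  · rw [span_image_update_of_mem x hj]
    induction n with
    | zero =>
      have : Subsingleton (R ⧸ Ideal.span {x j ^ 0} ⊔ Ideal.span (x '' (T \ {j}))) :=
        Ideal.Quotient.subsingleton_iff.2 (by simp)
      exact Function.injective_of_subsingleton _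
    | succ n ih =>
      have hxi := hx T i hi
      rw [← Function.update_eq_self j x, span_image_update_of_mem _ hj,
        Function.update_eq_self] at hxi
      rw [pow_succ]
      exact isSMulRegular_quotient_span_mul_sup ((hx _ j (by simp)).pow n) ih hxi
  · rw [Set.image_congr fun k hk => Function.update_of_ne (ne_of_mem_of_not_mem hk hj) _ x]
    exact hx T i hi

lemma IsPermutablyRegular.piecewise_pow [DecidableEq ι] (hx : IsPermutablyRegular x)
    (s : Finset ι) (n : ι → ℕ) : IsPermutablyRegular (s.piecewise (fun i => x i ^ n i) x) := by
  induction s using Finset.induction_on with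
  | empty => simpa using hx
  | insert j s hj ih =>
    rw [Finset.piecewise_insert]
    simpa only [Finset.piecewise_eq_of_notMem s _ x hj] using ih.update_pow j (n j)

lemma IsPermutablyRegular.mem_span_range_of_prod_pow_mul_mem [DecidableEq ι]
    (hx : IsPermutablyRegular x) (s : Finset ι) (d : ι → ℕ) {r : R}
    (h : (∏ i ∈ s, x i ^ d i) * r ∈
      Ideal.span (Set.range (s.piecewise (fun i => x i ^ (d i + 1)) x))) :
    r ∈ Ideal.span (Set.range x) := by
  induction s using Finset.induction_on generalizing r with
  | empty => simpa using h
  | insert j s hj ih =>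
    refine ih ?_
    set z := s.piecewise (fun i => x i ^ (d i + 1)) x with hz
    have hzj : z j = x j := Finset.piecewise_eq_of_notMem s _ x hj
    rw [Finset.prod_insert hj, mul_assoc, Finset.piecewise_insert, ← hz, ← Set.image_univ,
      span_image_update_of_mem z (Set.mem_univ j), pow_succ, ← hzj] at h
    have hreg := (hx.piecewise_pow s (fun i => d i + 1) (univ \ {j}) j (by simp)).pow (d j)
    rw [← Set.image_univ, ← Function.update_eq_self j z,
      span_image_update_of_mem _ (Set.mem_univ j)]
    exact mem_span_sup_of_mul_mem_span_mul_sup hreg h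

end RegularSequences

section MonomialIdeals

lemma toR_zero : toR (0 : Fin p → ℕ) = 0 := by
  ext i
  simp [toR]

lemma toR_add (a b : Fin p → ℕ) : toR (a + b) = toR a + toR b := by
  ext i
  simp [toR]

lemma monotone_toR : Monotone (toR (p := p)) :=
  fun _ _ hab i => Nat.cast_le.2 (hab i)

lemma mono_zero (x : Fin p → R) : mono x 0 = 1 := by
  simp [mono]

lemma mono_add (x : Fin p → R) (a b : Fin p → ℕ) : mono x (a + b) = mono x a * mono x b := by
  simp [mono, pow_add, Finset.prod_mul_distrib]

lemma mono_pow (x : Fin p → R) (a : Fin p → ℕ) (n : ℕ) : mono x a ^ n = mono x (n • a) := by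
  simp [mono, ← Finset.prod_pow, ← pow_mul, mul_comm]

lemma mono_single (x : Fin p → R) (i : Fin p) : mono x (Pi.single i 1) = x i := by
  rw [mono, Finset.prod_eq_single i] <;> simp +contextual

lemma mono_dvd_mono (x : Fin p → R) {a b : Fin p → ℕ} (h : a ≤ b) : mono x a ∣ mono x b :=
  Finset.prod_dvd_prod_of_dvd _ _ fun i _ => pow_dvd_pow _ (h i)

lemma map_mono {A : Type*} [CommRing A] (φ : R →+* A) (x : Fin p → R) (a : Fin p → ℕ) :
    φ (mono x a) = mono (φ ∘ x) a := by
  simp [mono]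

/-- The ideal generated by the monomials in `x` with exponents in `S`. -/
def monomialIdeal (x : Fin p → R) (S : Set (Fin p → ℕ)) : Ideal R := Ideal.span (mono x '' S)

variable {x : Fin p → R} {S T : Set (Fin p → ℕ)}

lemma mono_mem_monomialIdeal {a : Fin p → ℕ} (h : a ∈ S) : mono x a ∈ monomialIdeal x S :=
  Ideal.subset_span ⟨a, h, rfl⟩

lemma monomialIdeal_le {J : Ideal R} : monomialIdeal x S ≤ J ↔ ∀ a ∈ S, mono x a ∈ J := by
  simp [monomialIdeal, Ideal.span_le, Set.subset_def]

lemma monomialIdeal_mono (h : S ⊆ T) : monomialIdeal x S ≤ monomialIdeal x T :=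
  Ideal.span_mono (Set.image_mono h)

lemma monomialIdeal_le_minimals (x : Fin p → R) :
    monomialIdeal x S ≤ monomialIdeal x {a | Minimal (· ∈ S) a} := by
  refine monomialIdeal_le.2 fun a ha => ?_
  obtain ⟨b, hba, hb⟩ := exists_minimal_le_of_wellFoundedLT (· ∈ S) a ha
  exact Ideal.mem_of_dvd _ (mono_dvd_mono x hba) (mono_mem_monomialIdeal hb)

lemma map_monomialIdeal {A : Type*} [CommRing A] (φ : R →+* A) (x : Fin p → R)
    (S : Set (Fin p → ℕ)) : (monomialIdeal x S).map φ = monomialIdeal (φ ∘ x) S := by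
  simp only [monomialIdeal, Ideal.map_span, Set.image_image, map_mono]

lemma monomialIdeal_mul (x : Fin p → R) (S T : Set (Fin p → ℕ)) :
    monomialIdeal x S * monomialIdeal x T = monomialIdeal x (S + T) := by
  simp only [monomialIdeal, Ideal.span_mul_span', ← Set.image2_mul, ← Set.image2_add,
    Set.image2_image_left, Set.image2_image_right, Set.image_image2, mono_add]

lemma monomialIdeal_mul_le {U : Set (Fin p → ℕ)} (h : S + T ⊆ U) :
    monomialIdeal x S * monomialIdeal x T ≤ monomialIdeal x U :=
  (monomialIdeal_mul x S T).trans_le (monomialIdeal_mono h)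

lemma exists_eq_sum_of_mem_monomialIdeal {f : R} (hf : f ∈ monomialIdeal x S) :
    ∃ (s : Finset (Fin p → ℕ)) (c : (Fin p → ℕ) → R), ↑s ⊆ S ∧ f = ∑ a ∈ s, c a * mono x a := by
  obtain ⟨c, hc, rfl⟩ := (Finsupp.mem_span_image_iff_linearCombination R).1 hf
  exact ⟨c.support, c, hc, rfl⟩

lemma sum_mem_monomialIdeal {s : Finset (Fin p → ℕ)} (hs : ↑s ⊆ S) (c : (Fin p → ℕ) → R) :
    ∑ a ∈ s, c a * mono x a ∈ monomialIdeal x S :=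
  sum_mem fun _ ha => Ideal.mul_mem_left _ _ (mono_mem_monomialIdeal (hs ha))

lemma span_range_eq_monomialIdeal (x : Fin p → R) :
    Ideal.span (Set.range x) = monomialIdeal x (Set.range fun i => Pi.single i 1) := by
  rw [monomialIdeal, ← Set.range_comp]
  simp only [Function.comp_def, mono_single]

lemma span_range_pow_eq_monomialIdeal (x : Fin p → R) (n : ℕ) :
    Ideal.span (Set.range x) ^ n = monomialIdeal x {a | ∑ i, a i = n} := by
  refine le_antisymm ?_ (monomialIdeal_le.2 ?_)
  · induction n with
    | zero =>
      rw [pow_zero, Ideal.one_eq_top, top_le_iff, Ideal.eq_top_iff_one, ← mono_zero x]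
      exact mono_mem_monomialIdeal (by simp)
    | succ n ih =>
      rw [pow_succ, span_range_eq_monomialIdeal x]
      rw [span_range_eq_monomialIdeal x] at ih
      refine (Ideal.mul_mono_left ih).trans (monomialIdeal_mul_le ?_)
      rintro _ ⟨a, ha, _, ⟨i, rfl⟩, rfl⟩
      simpa [Finset.sum_add_distrib] using ha
  · rintro a rfl
    rw [← Finset.prod_pow_eq_pow_sum]
    exact Ideal.prod_mem_prod fun i _ =>
      Ideal.pow_mem_pow (Ideal.subset_span (Set.mem_range_self i)) _

/-- The elements `x` are monomially independent if no monomial in them lies in the ideal generated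
by the monomials whose exponents do not divide it; equivalently, membership of monomials in
monomial ideals is as in a polynomial ring. -/
def IsMonomiallyIndependent (x : Fin p → R) : Prop :=
  ∀ a, mono x a ∉ monomialIdeal x (Set.Iic a)ᶜ

lemma IsMonomiallyIndependent.mono_dvd_mono_iff (hx : IsMonomiallyIndependent x)
    {a b : Fin p → ℕ} : mono x a ∣ mono x b ↔ a ≤ b :=
  ⟨fun h => by_contra fun hab =>
    hx b (Ideal.mem_of_dvd _ h (mono_mem_monomialIdeal hab)), mono_dvd_mono x⟩

lemma IsPermutablyRegular.mem_span_range_of_mono_mul_mem (hx : IsPermutablyRegular x)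
    {a : Fin p → ℕ} {r : R} (h : mono x a * r ∈ monomialIdeal x (Set.Iic a)ᶜ) :
    r ∈ Ideal.span (Set.range x) := by
  refine hx.mem_span_range_of_prod_pow_mul_mem Finset.univ a (monomialIdeal_le.2 ?_ h)
  intro b hb
  obtain ⟨i, hi⟩ := not_forall.1 (show ¬ ∀ i, b i ≤ a i from hb)
  have hdvd : x i ^ (a i + 1) ∣ mono x b :=
    (pow_dvd_pow _ (not_le.1 hi)).trans
      (Finset.dvd_prod_of_mem (fun i => x i ^ b i) (Finset.mem_univ i))
  exact Ideal.mem_of_dvd _ hdvd (Ideal.subset_span ⟨i, by simp⟩)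

lemma IsPermutablyRegular.isMonomiallyIndependent (hx : IsPermutablyRegular x)
    (hx_ne_top : Ideal.span (Set.range x) ≠ ⊤) : IsMonomiallyIndependent x :=
  fun _ ha => (Ideal.ne_top_iff_one _).1 hx_ne_top
    (hx.mem_span_range_of_mono_mul_mem (by rwa [mul_one]))

end MonomialIdeals

section Exponents

/-- The exponents of `f`: those `a` such that `f` is not in the ideal generated by the monomials
that do not divide `x ^ a`. For a power series this is the upper closure of the set of exponents of
the nonzero terms. -/
def exponents (x : Fin p → R) (f : R) : Set (Fin p → ℕ) :=
  {a | f ∉ monomialIdeal x (Set.Iic a)ᶜ}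

lemma isUpperSet_exponents (x : Fin p → R) (f : R) : IsUpperSet (exponents x f) :=
  fun _ _ hab ha hb => ha (monomialIdeal_mono (compl_subset_compl.2 (Set.Iic_subset_Iic.2 hab)) hb)

lemma exponents_subset_of_mem_monomialIdeal {x : Fin p → R} {f : R} {S : Set (Fin p → ℕ)}
    (hS : IsUpperSet S) (hf : f ∈ monomialIdeal x S) : exponents x f ⊆ S :=
  fun _ ha => by_contra fun haS =>
    ha (monomialIdeal_mono (fun _ hb hba => haS (hS hba hb)) hf)

/-- A representation of `f` as a sum of monomials with unit coefficients. -/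
def IsUnitMonRep (x : Fin p → R) (f : R) (B : Finset (Fin p → ℕ)) : Prop :=
  ∃ u : (Fin p → ℕ) → R, (∀ b ∈ B, IsUnit (u b)) ∧ f = ∑ b ∈ B, u b * mono x b

lemma IsUnitMonRep.mem_monomialIdeal {x : Fin p → R} {f : R} {B : Finset (Fin p → ℕ)}
    (hf : IsUnitMonRep x f B) {S : Set (Fin p → ℕ)} (hB : ↑B ⊆ S) : f ∈ monomialIdeal x S := by
  obtain ⟨u, -, rfl⟩ := hf
  exact sum_mem_monomialIdeal hB u

lemma isUnitMonRep_mono (x : Fin p → R) (a : Fin p → ℕ) : IsUnitMonRep x (mono x a) {a} :=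
  ⟨1, by simp, by simp⟩

lemma IsUnitMonRep.mono_mul {x : Fin p → R} {f : R} {B : Finset (Fin p → ℕ)}
    (hf : IsUnitMonRep x f B) (c : Fin p → ℕ) :
    IsUnitMonRep x (mono x c * f) (B.map (addRightEmbedding c)) := by
  obtain ⟨u, hu, rfl⟩ := hf
  refine ⟨fun b => u (b - c), by simpa using hu, ?_⟩
  simp [Finset.mul_sum, mono_add, mul_comm, mul_left_comm]

lemma mem_of_forall_mem_sup_pow [IsNoetherianRing R] {I J : Ideal R}
    (hI : I ≤ Ideal.jacobson ⊥) {f : R} (h : ∀ n : ℕ, f ∈ J ⊔ I ^ n) : f ∈ J := by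
  have := IsHausdorff.of_le_jacobson I (R ⧸ J) hI
  refine Ideal.Quotient.eq_zero_iff_mem.1 (this.haus _ fun n => ?_)
  rw [SModEq.zero, Ideal.smul_top_eq_map, Submodule.restrictScalars_mem,
    Ideal.Quotient.algebraMap_eq, Ideal.mem_quotient_iff_mem_sup, sup_comm]
  exact h n

variable {A : Type*} [CommRing A] [IsLocalRing A] {y : Fin p → A}

/-- The terms other than `a` contribute to the ideal of monomials not dividing `y ^ a`, and so
does the term `a` itself if its coefficient is in the maximal ideal. -/
lemma IsMonomiallyIndependent.mem_exponents_sum_iff (hy : IsMonomiallyIndependent y)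
    (hm : Ideal.span (Set.range y) = IsLocalRing.maximalIdeal A) {s : Finset (Fin p → ℕ)}
    (hs : IsAntichain (· ≤ ·) (s : Set (Fin p → ℕ))) {a : Fin p → ℕ} (ha : a ∈ s)
    (c : (Fin p → ℕ) → A) :
    a ∈ exponents y (∑ b ∈ s, c b * mono y b) ↔ IsUnit (c a) := by
  classical
  have hrest : ∑ b ∈ s.erase a, c b * mono y b ∈ monomialIdeal y (Set.Iic a)ᶜ :=
    sum_mem_monomialIdeal (fun b hb =>
      hs (Finset.mem_of_mem_erase hb) ha (Finset.ne_of_mem_erase hb)) c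
  rw [exponents, Set.mem_ofPred_eq, ← Finset.add_sum_erase s _ ha,
    Ideal.add_mem_iff_left _ hrest, ← not_iff_not, not_not]
  refine ⟨fun h hu => hy a ((Ideal.unit_mul_mem_iff_mem _ hu).1 h), fun hu => ?_⟩
  rw [← mem_nonunits_iff, ← IsLocalRing.mem_maximalIdeal, ← hm, span_range_eq_monomialIdeal] at hu
  refine monomialIdeal_mul_le ?_
    (Ideal.mul_mem_mul hu (mono_mem_monomialIdeal (Set.mem_singleton a)))
  rintro _ ⟨_, ⟨i, rfl⟩, _, rfl, rfl⟩ hle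
  simpa using hle i

lemma IsMonomiallyIndependent.mem_sup_pow_succ (hy : IsMonomiallyIndependent y)
    (hm : Ideal.span (Set.range y) = IsLocalRing.maximalIdeal A) {f : A} {n : ℕ}
    (hf : f ∈ monomialIdeal y (exponents y f) ⊔ IsLocalRing.maximalIdeal A ^ n) :
    f ∈ monomialIdeal y (exponents y f) ⊔ IsLocalRing.maximalIdeal A ^ (n + 1) := by
  obtain ⟨g, hg, h, hh, hgh⟩ := Submodule.mem_sup.1 hf
  rw [← hm, span_range_pow_eq_monomialIdeal] at hh
  obtain ⟨s, c, hs, rfl⟩ := exists_eq_sum_of_mem_monomialIdeal hh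
  have hanti : IsAntichain (· ≤ ·) (s : Set (Fin p → ℕ)) := fun a ha b hb hne hab =>
    hne (funext fun i => (Finset.sum_eq_sum_iff_of_le fun i _ => hab i).1
      ((hs ha).trans (hs hb).symm) i (Finset.mem_univ i))
  suffices hterm : ∀ a ∈ s, c a * mono y a ∈
      monomialIdeal y (exponents y f) ⊔ IsLocalRing.maximalIdeal A ^ (n + 1) by
    have hsum := add_mem (Ideal.mem_sup_left hg) (Submodule.sum_mem _ hterm)
    rwa [hgh] at hsum
  intro a ha
  by_cases hfa : a ∈ exponents y f
  · exact Ideal.mem_sup_left (Ideal.mul_mem_left _ _ (mono_mem_monomialIdeal hfa))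
  · have hga : g ∈ monomialIdeal y (Set.Iic a)ᶜ :=
      monomialIdeal_mono (fun b hb hba => hfa (isUpperSet_exponents y f hba hb)) hg
    have hca : ¬ IsUnit (c a) := by
      rw [← hy.mem_exponents_sum_iff hm hanti ha c, exponents, Set.mem_ofPred_eq, not_not,
        ← Ideal.add_mem_iff_right _ hga, hgh]
      exact not_not.1 hfa
    refine Ideal.mem_sup_right ?_
    rw [pow_succ']
    refine Ideal.mul_mem_mul hca ?_
    rw [← hm, span_range_pow_eq_monomialIdeal]
    exact mono_mem_monomialIdeal (hs ha)

lemma IsMonomiallyIndependent.mem_monomialIdeal_exponents [IsNoetherianRing A]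
    (hy : IsMonomiallyIndependent y)
    (hm : Ideal.span (Set.range y) = IsLocalRing.maximalIdeal A) (f : A) :
    f ∈ monomialIdeal y (exponents y f) := by
  have hpow (n : ℕ) : f ∈ monomialIdeal y (exponents y f) ⊔ IsLocalRing.maximalIdeal A ^ n := by
    induction n with
    | zero => simp
    | succ n ih => exact hy.mem_sup_pow_succ hm ih
  exact mem_of_forall_mem_sup_pow (IsLocalRing.maximalIdeal_le_jacobson _) hpow

lemma IsMonomiallyIndependent.exists_isUnitMonRep [IsNoetherianRing A]
    (hy : IsMonomiallyIndependent y)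
    (hm : Ideal.span (Set.range y) = IsLocalRing.maximalIdeal A) (f : A) :
    ∃ B : Finset (Fin p → ℕ),
      IsUnitMonRep y f B ∧ IsAntichain (· ≤ ·) (B : Set (Fin p → ℕ)) := by
  obtain ⟨B, c, hB, hf⟩ := exists_eq_sum_of_mem_monomialIdeal
    (monomialIdeal_le_minimals _ (hy.mem_monomialIdeal_exponents hm f))
  have hanti := (setOfPred_minimal_antichain (· ∈ exponents y f)).subset hB
  refine ⟨B, ⟨c, fun b hb => ?_, hf⟩, hanti⟩
  rw [← hy.mem_exponents_sum_iff hm hanti hb c, ← hf]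
  exact (hB hb).prop

lemma IsUnitMonRep.exponents_eq (hy : IsMonomiallyIndependent y)
    (hm : Ideal.span (Set.range y) = IsLocalRing.maximalIdeal A) {f : A}
    {B : Finset (Fin p → ℕ)} (hf : IsUnitMonRep y f B)
    (hB : IsAntichain (· ≤ ·) (B : Set (Fin p → ℕ))) :
    exponents y f = upperClosure (B : Set (Fin p → ℕ)) := by
  obtain ⟨u, hu, rfl⟩ := hf
  refine (exponents_subset_of_mem_monomialIdeal (upperClosure _).upper
    (sum_mem_monomialIdeal subset_upperClosure u)).antisymm ?_
  rintro a ⟨b, hb, hba⟩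
  exact isUpperSet_exponents _ _ hba ((hy.mem_exponents_sum_iff hm hB hb u).2 (hu b hb))

lemma IsUnitMonRep.coe_eq_minimals (hy : IsMonomiallyIndependent y)
    (hm : Ideal.span (Set.range y) = IsLocalRing.maximalIdeal A) {f : A}
    {B : Finset (Fin p → ℕ)} (hf : IsUnitMonRep y f B)
    (hB : IsAntichain (· ≤ ·) (B : Set (Fin p → ℕ))) :
    (B : Set (Fin p → ℕ)) = {b | Minimal (· ∈ exponents y f) b} := by
  ext b
  rw [hf.exponents_eq hy hm hB]
  exact hB.minimal_mem_upperClosure_iff_mem.symm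

end Exponents

section IntegralClosure

lemma subset_intClosure (I : Ideal R) : (I : Set R) ⊆ intClosure I := by
  refine fun f hf => ⟨1, one_pos, fun _ => -f, fun i hi => ?_, by simp⟩
  obtain rfl : i = 1 := by simpa using hi
  simpa using hf

lemma map_mem_intClosure_map {A : Type*} [CommRing A] (φ : R →+* A) {I : Ideal R} {f : R}
    (hf : f ∈ intClosure I) : φ f ∈ intClosure (I.map φ) := by
  obtain ⟨n, hn, a, ha, he⟩ := hf
  refine ⟨n, hn, φ ∘ a, fun i hi => ?_, by simpa using congrArg φ he⟩
  rw [← Ideal.map_pow]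
  exact Ideal.mem_map_of_mem _ (ha i hi)

lemma monomialIdeal_lt_le_monomialIdeal_le {α : Type*} [Preorder α] {x : Fin p → R}
    {key : (Fin p → ℕ) → α} {c : α} :
    monomialIdeal x {a | c < key a} ≤ monomialIdeal x {a | c ≤ key a} :=
  monomialIdeal_mono fun _ => le_of_lt

variable {L : Type*} [AddCommMonoid L] [LinearOrder L] [IsOrderedCancelAddMonoid L]
  {y : Fin p → R} {key : (Fin p → ℕ) →+ L} {c d : L} {f g : R}

lemma mul_mem_monomialIdeal_lt_of_lt_of_le (hf : f ∈ monomialIdeal y {a | c < key a})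
    (hg : g ∈ monomialIdeal y {a | d ≤ key a}) : f * g ∈ monomialIdeal y {a | c + d < key a} := by
  refine monomialIdeal_mul_le ?_ (Ideal.mul_mem_mul hf hg)
  rintro _ ⟨a, ha, b, hb, rfl⟩
  exact (add_lt_add_of_lt_of_le ha hb).trans_eq (map_add key a b).symm

lemma pow_mem_monomialIdeal_le (hf : f ∈ monomialIdeal y {a | c ≤ key a}) (n : ℕ) :
    f ^ n ∈ monomialIdeal y {a | n • c ≤ key a} := by
  induction n with
  | zero =>
    rw [pow_zero, ← mono_zero y]
    exact mono_mem_monomialIdeal (by simp)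
  | succ n ih =>
    rw [pow_succ, succ_nsmul]
    refine monomialIdeal_mul_le ?_ (Ideal.mul_mem_mul ih hf)
    rintro _ ⟨a, ha, b, hb, rfl⟩
    exact (add_le_add ha hb).trans_eq (map_add key a b).symm

lemma pow_le_monomialIdeal_lt {J : Ideal R} (hJ : J ≤ monomialIdeal y {a | c < key a}) (n : ℕ) :
    J ^ (n + 1) ≤ monomialIdeal y {a | (n + 1) • c < key a} := by
  induction n with
  | zero => simpa using hJ
  | succ n ih =>
    rw [pow_succ, succ_nsmul]
    exact Ideal.mul_le.2 fun r hr s hs => mul_mem_monomialIdeal_lt_of_lt_of_le (ih hr)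
      (monomialIdeal_lt_le_monomialIdeal_le (hJ hs))

lemma pow_sub_pow_mem_monomialIdeal_lt (hg : g ∈ monomialIdeal y {a | c ≤ key a})
    (hfg : f - g ∈ monomialIdeal y {a | c < key a}) (n : ℕ) :
    f ^ n - g ^ n ∈ monomialIdeal y {a | n • c < key a} := by
  have hf : f ∈ monomialIdeal y {a | c ≤ key a} := by
    simpa using add_mem (monomialIdeal_lt_le_monomialIdeal_le hfg) hg
  induction n with
  | zero => simp
  | succ n ih =>
    rw [show f ^ (n + 1) - g ^ (n + 1) = (f ^ n - g ^ n) * f + (f - g) * g ^ n by ring, succ_nsmul]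
    refine add_mem (mul_mem_monomialIdeal_lt_of_lt_of_le ih hf) ?_
    rw [add_comm]
    exact mul_mem_monomialIdeal_lt_of_lt_of_le hfg (pow_mem_monomialIdeal_le hg n)

lemma exists_pow_mem_monomialIdeal_lt_of_mem_intClosure {J : Ideal R}
    (hJ : J ≤ monomialIdeal y {a | c < key a}) (hf : f ∈ monomialIdeal y {a | c ≤ key a})
    (hfJ : f ∈ intClosure J) : ∃ n : ℕ, f ^ n ∈ monomialIdeal y {a | n • c < key a} := by
  obtain ⟨n, -, r, hr, he⟩ := hfJ
  refine ⟨n, ?_⟩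
  rw [eq_neg_of_add_eq_zero_left he]
  refine neg_mem (Submodule.sum_mem _ fun i hi => ?_)
  obtain ⟨hi₁, hin⟩ := Finset.mem_Icc.1 hi
  have hri : r i ∈ monomialIdeal y {a | i • c < key a} := by
    simpa only [Nat.sub_add_cancel hi₁] using pow_le_monomialIdeal_lt hJ (i - 1)
      (by simpa only [Nat.sub_add_cancel hi₁] using hr i hi)
  simpa only [← add_nsmul, Nat.add_sub_cancel' hin] using
    mul_mem_monomialIdeal_lt_of_lt_of_le hri (pow_mem_monomialIdeal_le hf (n - i))

/-- If `u * y ^ b` is the initial term of `f`, then `u ^ n * y ^ (n b)` is that of `f ^ n`, so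
`f ^ n` cannot move up in the filtration as an integral equation over `J` would force. -/
lemma IsMonomiallyIndependent.notMem_intClosure (hy : IsMonomiallyIndependent y)
    (hkey : Monotone key) {b : Fin p → ℕ} {u : R} (hu : IsUnit u)
    (hf : f - u * mono y b ∈ monomialIdeal y {a | key b < key a}) {J : Ideal R}
    (hJ : J ≤ monomialIdeal y {a | key b < key a}) : f ∉ intClosure J := by
  intro hfJ
  have hb : u * mono y b ∈ monomialIdeal y {a | key b ≤ key a} :=
    Ideal.mul_mem_left _ _ (mono_mem_monomialIdeal (le_refl (key b)))
  have hfb : f ∈ monomialIdeal y {a | key b ≤ key a} := by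
    simpa using add_mem (monomialIdeal_lt_le_monomialIdeal_le hf) hb
  obtain ⟨n, hn⟩ := exists_pow_mem_monomialIdeal_lt_of_mem_intClosure hJ hfb hfJ
  have hbn := sub_mem hn (pow_sub_pow_mem_monomialIdeal_lt hb hf n)
  rw [sub_sub_cancel, mul_pow, Ideal.unit_mul_mem_iff_mem _ (hu.pow n), mono_pow] at hbn
  refine hy (n • b) (monomialIdeal_mono (fun a ha hab => ?_) hbn)
  exact (hkey hab).not_gt ((map_nsmul key n b).trans_lt ha)

/-- The order on exponents by weight for `w`, with ties broken lexicographically. -/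
def weightLex (w : Fin p → ℝ) : (Fin p → ℕ) →+ (ℝ ×ₗ Lex (Fin p → ℕ)) where
  toFun a := toLex (w ⬝ᵥ toR a, toLex a)
  map_zero' := by
    rw [toR_zero, dotProduct_zero]
    rfl
  map_add' a b := by
    rw [toR_add, dotProduct_add]
    rfl

lemma monotone_weightLex {w : Fin p → ℝ} (hw : 0 ≤ w) : Monotone (weightLex w) :=
  fun _ _ hab => Prod.Lex.toLex_mono (Prod.mk_le_mk.2
    ⟨dotProduct_le_dotProduct_of_nonneg_left (monotone_toR hab) hw, Pi.toLex_monotone hab⟩)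

lemma injective_weightLex (w : Fin p → ℝ) : Function.Injective (weightLex w) :=
  fun _ _ h => congrArg (fun z : ℝ ×ₗ Lex (Fin p → ℕ) => ofLex (ofLex z).2) h

lemma weightLex_lt_of_dotProduct_lt {w : Fin p → ℝ} {a b : Fin p → ℕ}
    (h : w ⬝ᵥ toR a < w ⬝ᵥ toR b) : weightLex w a < weightLex w b :=
  Prod.Lex.lt_iff.2 (Or.inl h)

lemma IsUnitMonRep.le_dotProduct_of_mem_intClosure (hy : IsMonomiallyIndependent y)
    {B : Finset (Fin p → ℕ)} (hB : IsUnitMonRep y f B) {w : Fin p → ℝ} (hw : 0 ≤ w) {c : ℝ}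
    {J : Ideal R} (hJ : J ≤ monomialIdeal y {a | c ≤ w ⬝ᵥ toR a}) (hf : f ∈ intClosure J)
    {b : Fin p → ℕ} (hb : b ∈ B) : c ≤ w ⬝ᵥ toR b := by
  classical
  by_contra! hbc
  obtain ⟨b₀, hb₀, hmin⟩ := B.exists_min_image (weightLex w) ⟨b, hb⟩
  have hb₀c : w ⬝ᵥ toR b₀ < c :=
    (not_lt.1 fun h => (hmin b hb).not_gt (weightLex_lt_of_dotProduct_lt h)).trans_lt hbc
  obtain ⟨u, hu, rfl⟩ := hB
  refine hy.notMem_intClosure (monotone_weightLex hw) (b := b₀) (hu b₀ hb₀) ?_ (hJ.trans ?_) hf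
  · rw [← Finset.add_sum_erase _ _ hb₀, add_sub_cancel_left]
    refine sum_mem_monomialIdeal (fun d hd => ?_) u
    obtain ⟨hdb₀, hdB⟩ := Finset.mem_erase.1 hd
    exact (hmin d hdB).lt_of_ne fun h => hdb₀ (injective_weightLex w h.symm)
  · exact monomialIdeal_mono fun a ha => weightLex_lt_of_dotProduct_lt (hb₀c.trans_le ha)

end IntegralClosure

section Convexity

lemma convexHull_range_toR : convexHull ℝ (Set.range (toR (p := p))) = Set.Ici 0 := by
  have hrange : Set.range (toR (p := p)) = Set.pi Set.univ fun _ => Set.range (Nat.cast : ℕ → ℝ) :=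
    Set.range_piMap _
  have hnat : convexHull ℝ (Set.range (Nat.cast : ℕ → ℝ)) = Set.Ici 0 := by
    refine (convexHull_min ?_ (convex_Ici 0)).antisymm fun r hr => ?_
    · rintro _ ⟨n, rfl⟩
      exact Set.mem_Ici.2 (Nat.cast_nonneg n)
    · obtain ⟨n, hn⟩ := exists_nat_ge r
      have hseg : r ∈ segment ℝ ((0 : ℕ) : ℝ) n := by
        rw [segment_eq_Icc (by simp)]
        exact ⟨by simpa using hr, hn⟩
      exact segment_subset_convexHull (Set.mem_range_self 0) (Set.mem_range_self n) hseg
  rw [hrange, convexHull_pi, hnat, ← Set.pi_univ_Ici]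
  rfl

variable {S : Set (Fin p → ℕ)}

lemma minimals_add_univ_of_isUpperSet (hS : IsUpperSet S) :
    {a | Minimal (· ∈ S) a} + Set.univ = S := by
  ext a
  constructor
  · rintro ⟨b, hb, c, -, rfl⟩
    exact hS le_self_add hb.prop
  · intro ha
    obtain ⟨b, hba, hb⟩ := exists_minimal_le_of_wellFoundedLT (· ∈ S) a ha
    exact ⟨b, hb, a - b, trivial, add_tsub_cancel_of_le hba⟩

lemma convexHull_image_toR_eq_add_Ici (hS : IsUpperSet S) :
    convexHull ℝ (toR '' S) =
      convexHull ℝ (toR '' {a | Minimal (· ∈ S) a}) + Set.Ici 0 := by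
  have himage : toR '' S = toR '' {a | Minimal (· ∈ S) a} + Set.range toR := by
    rw [← Set.image_univ, ← Set.image2_add, ← Set.image_image2_distrib toR_add, Set.image2_add,
      minimals_add_univ_of_isUpperSet hS]
  rw [himage, convexHull_add, convexHull_range_toR]

lemma isUpperSet_convexHull_image_toR (hS : IsUpperSet S) :
    IsUpperSet (convexHull ℝ (toR '' S)) := by
  rw [convexHull_image_toR_eq_add_Ici hS]
  exact (isUpperSet_Ici 0).add_left

lemma isClosed_convexHull_image_toR (hS : IsUpperSet S) :
    IsClosed (convexHull ℝ (toR '' S)) := by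
  have hfin : {a | Minimal (· ∈ S) a}.Finite :=
    WellQuasiOrderedLE.finite_of_isAntichain (setOfPred_minimal_antichain _)
  rw [convexHull_image_toR_eq_add_Ici hS]
  exact isClosed_Ici.add_left_of_isCompact ((hfin.image _).isCompact_convexHull ℝ)

lemma exists_nonneg_dotProduct_lt_of_notMem {ι : Type*} [Fintype ι] {C : Set (ι → ℝ)}
    (hconv : Convex ℝ C) (hclosed : IsClosed C) (hupper : IsUpperSet C) {b : ι → ℝ} (hb : b ∉ C) :
    ∃ w : ι → ℝ, 0 ≤ w ∧ ∃ c, w ⬝ᵥ b < c ∧ ∀ v ∈ C, c ≤ w ⬝ᵥ v := by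
  classical
  rcases C.eq_empty_or_nonempty with rfl | ⟨s, hs⟩
  · exact ⟨0, le_rfl, 1, by simp, by simp⟩
  obtain ⟨g, c, hgb, hgC⟩ := geometric_hahn_banach_point_closed hconv hclosed hb
  obtain ⟨w, hw⟩ := (dotProductEquiv ℝ ι).surjective g.toLinearMap
  have hwg (v : ι → ℝ) : w ⬝ᵥ v = g v := LinearMap.congr_fun hw v
  refine ⟨w, fun i => ?_, c, (hwg b).trans_lt hgb, fun v hv => (hwg v ▸ hgC v hv).le⟩
  by_contra! hneg
  set t : ℝ := (c - w ⬝ᵥ s) / w i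
  have hcs : c - w ⬝ᵥ s ≤ 0 := by linarith [hgC s hs, hwg s]
  have ht : 0 ≤ t := div_nonneg_of_nonpos hcs hneg.le
  have hst : s + Pi.single i t ∈ C := hupper (le_add_of_nonneg_right (Pi.single_nonneg.2 ht)) hs
  have hlt := hgC _ hst
  rw [← hwg, dotProduct_add, dotProduct_single, mul_div_cancel₀ _ hneg.ne] at hlt
  linarith

lemma IsUnitMonRep.toR_mem_convexHull_of_mem_intClosure {y : Fin p → R}
    (hy : IsMonomiallyIndependent y) {f : R} {B : Finset (Fin p → ℕ)} (hB : IsUnitMonRep y f B)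
    (hS : IsUpperSet S) {J : Ideal R}
    (hJ : J ≤ monomialIdeal y {a | toR a ∈ convexHull ℝ (toR '' S)}) (hf : f ∈ intClosure J)
    {b : Fin p → ℕ} (hb : b ∈ B) : toR b ∈ convexHull ℝ (toR '' S) := by
  by_contra hbS
  obtain ⟨w, hw, c, hwb, hc⟩ := exists_nonneg_dotProduct_lt_of_notMem (convex_convexHull ℝ _)
    (isClosed_convexHull_image_toR hS) (isUpperSet_convexHull_image_toR hS) hbS
  refine hwb.not_ge (hB.le_dotProduct_of_mem_intClosure hy hw (hJ.trans ?_) hf hb)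
  exact monomialIdeal_mono fun a ha => hc _ ha

end Convexity

section Support

variable {x : Fin p → R} {f : R} {B : Finset (Fin p → ℕ)}

lemma isMinMonRep_iff_isAntichain (hx : IsMonomiallyIndependent x) :
    IsMinMonRep x f B ↔ IsMonRep x f B ∧ IsAntichain (· ≤ ·) (B : Set (Fin p → ℕ)) := by
  simp only [IsMinMonRep, hx.mono_dvd_mono_iff]
  rfl

variable [(Ideal.span (Set.range x)).IsPrime]

section

variable (A : Type*) [CommRing A] [Algebra R A]
  [IsLocalization.AtPrime A (Ideal.span (Set.range x))]

lemma IsPermutablyRegular.isMonomiallyIndependent_algebraMap (hx : IsPermutablyRegular x) :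
    IsMonomiallyIndependent (algebraMap R A ∘ x) := by
  intro a ha
  rw [← map_mono, ← map_monomialIdeal, IsLocalization.algebraMap_mem_map_algebraMap_iff
    (Ideal.span (Set.range x)).primeCompl] at ha
  obtain ⟨r, hr, hra⟩ := ha
  exact hr (hx.mem_span_range_of_mono_mul_mem (by rwa [mul_comm]))

lemma span_range_algebraMap_eq_maximalIdeal [IsLocalRing A] :
    Ideal.span (Set.range (algebraMap R A ∘ x)) = IsLocalRing.maximalIdeal A := by
  rw [← IsLocalization.AtPrime.map_eq_maximalIdeal (Ideal.span (Set.range x)) A, Ideal.map_span,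
    ← Set.range_comp]

lemma IsMonRep.isUnitMonRep_algebraMap (hB : IsMonRep x f B) :
    IsUnitMonRep (algebraMap R A ∘ x) (algebraMap R A f) B := by
  obtain ⟨h, r, hh, hr, he⟩ := hB
  have hunit {s : R} (hs : s ∉ Ideal.span (Set.range x)) : IsUnit (algebraMap R A s) :=
    (IsLocalization.AtPrime.isUnit_to_map_iff A (Ideal.span (Set.range x)) s).2 hs
  obtain ⟨v, hv⟩ := hunit hh
  refine ⟨fun b => ↑v⁻¹ * algebraMap R A (r b), fun b hb => v⁻¹.isUnit.mul (hunit (hr b hb)), ?_⟩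
  rw [← Units.inv_mul_cancel_left v (algebraMap R A f), hv, ← map_mul, he]
  simp only [map_sum, map_mul, map_mono, Finset.mul_sum, mul_assoc]

variable {A}

lemma IsUnitMonRep.isMonRep_of_algebraMap
    (hB : IsUnitMonRep (algebraMap R A ∘ x) (algebraMap R A f) B) : IsMonRep x f B := by
  obtain ⟨u, hu, he⟩ := hB
  set P := Ideal.span (Set.range x)
  obtain ⟨h, hh⟩ := IsLocalization.exist_integer_multiples P.primeCompl B u
  choose! r hr using hh
  simp only [Algebra.smul_def] at hr
  have hrP (b : Fin p → ℕ) (hb : b ∈ B) : r b ∈ P.primeCompl := by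
    refine (IsLocalization.AtPrime.isUnit_to_map_iff A P _).1 ?_
    rw [hr b hb]
    exact (IsLocalization.map_units A h).mul (hu b hb)
  have hmap : algebraMap R A (h * f) = algebraMap R A (∑ b ∈ B, r b * mono x b) := by
    rw [map_mul, he, map_sum, Finset.mul_sum]
    exact Finset.sum_congr rfl fun b hb => by rw [map_mul, map_mono, hr b hb, mul_assoc]
  obtain ⟨c, hc⟩ := IsLocalization.exists_of_eq (M := P.primeCompl) hmap
  refine ⟨c * h, fun b => c * r b, (c * h).2, fun b hb => mul_mem c.2 (hrP b hb), ?_⟩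
  simp only [mul_assoc, hc, Finset.mul_sum]

lemma isMinMonRep_iff_isUnitMonRep_algebraMap (hx : IsPermutablyRegular x) :
    IsMinMonRep x f B ↔ IsUnitMonRep (algebraMap R A ∘ x) (algebraMap R A f) B ∧
      IsAntichain (· ≤ ·) (B : Set (Fin p → ℕ)) := by
  rw [isMinMonRep_iff_isAntichain (hx.isMonomiallyIndependent Ideal.IsPrime.ne_top')]
  exact and_congr_left' ⟨fun h => h.isUnitMonRep_algebraMap A, fun h => h.isMonRep_of_algebraMap⟩

lemma supp_eq_of_isUnitMonRep_algebraMap (hx : IsPermutablyRegular x)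
    (hB : IsUnitMonRep (algebraMap R A ∘ x) (algebraMap R A f) B)
    (hanti : IsAntichain (· ≤ ·) (B : Set (Fin p → ℕ))) : supp x f = B := by
  have := IsLocalization.AtPrime.isLocalRing A (Ideal.span (Set.range x))
  have hmin : ∃ B, IsMinMonRep x f B :=
    ⟨B, (isMinMonRep_iff_isUnitMonRep_algebraMap hx).2 ⟨hB, hanti⟩⟩
  obtain ⟨hB', hanti'⟩ := (isMinMonRep_iff_isUnitMonRep_algebraMap (A := A) hx).1 hmin.choose_spec
  have hy := hx.isMonomiallyIndependent_algebraMap A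
  have hm := span_range_algebraMap_eq_maximalIdeal (x := x) A
  rw [supp, dif_pos hmin, hB'.coe_eq_minimals hy hm hanti', hB.coe_eq_minimals hy hm hanti]

end

lemma supp_mono (hx : IsPermutablyRegular x) (a : Fin p → ℕ) : supp x (mono x a) = {a} := by
  have hrep := isUnitMonRep_mono
    (algebraMap R (Localization.AtPrime (Ideal.span (Set.range x))) ∘ x) a
  rw [← map_mono] at hrep
  simpa using supp_eq_of_isUnitMonRep_algebraMap hx hrep (by simp)

variable [IsNoetherianRing (Localization.AtPrime (Ideal.span (Set.range x)))]

lemma exists_supp_eq_and_isUnitMonRep (hx : IsPermutablyRegular x) (f : R) :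
    ∃ B : Finset (Fin p → ℕ), supp x f = B ∧
      IsUnitMonRep (algebraMap R (Localization.AtPrime (Ideal.span (Set.range x))) ∘ x)
        (algebraMap R _ f) B ∧ IsAntichain (· ≤ ·) (B : Set (Fin p → ℕ)) := by
  obtain ⟨B, hB, hanti⟩ := (hx.isMonomiallyIndependent_algebraMap
    (Localization.AtPrime (Ideal.span (Set.range x)))).exists_isUnitMonRep
      (span_range_algebraMap_eq_maximalIdeal _) (algebraMap R _ f)
  exact ⟨B, supp_eq_of_isUnitMonRep_algebraMap hx hB hanti, hB, hanti⟩

lemma add_mem_supp_mono_mul (hx : IsPermutablyRegular x) {a : Fin p → ℕ} (ha : a ∈ supp x f)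
    (c : Fin p → ℕ) : a + c ∈ supp x (mono x c * f) := by
  obtain ⟨B, hfB, hB, hanti⟩ := exists_supp_eq_and_isUnitMonRep hx f
  have hrep := hB.mono_mul c
  rw [← map_mono, ← map_mul] at hrep
  rw [supp_eq_of_isUnitMonRep_algebraMap hx hrep
    (by simpa using hanti.image (· + c) fun _ _ => le_of_add_le_add_right)]
  simpa [hfB] using ha

lemma isUpperSet_biUnion_supp (hx : IsPermutablyRegular x) (I : Ideal R) :
    IsUpperSet (⋃ f ∈ (I : Set R), supp x f) := by
  intro a b hab ha
  obtain ⟨f, hf, haf⟩ := Set.mem_iUnion₂.1 ha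
  refine Set.mem_iUnion₂.2 ⟨mono x (b - a) * f, I.mul_mem_left _ hf, ?_⟩
  simpa only [add_tsub_cancel_of_le hab] using add_mem_supp_mono_mul hx haf (b - a)

end Support

section NewtonPolyhedron

variable {x : Fin p → R}

lemma monotone_Γ (x : Fin p → R) : Monotone (Γ x) := fun _ _ hST =>
  convexHull_mono (Set.image_mono (Set.biUnion_subset_biUnion_left hST))

lemma toR_mem_Γ {S : Set R} {f : R} (hf : f ∈ S) {a : Fin p → ℕ} (ha : a ∈ supp x f) :
    toR a ∈ Γ x S :=
  subset_convexHull ℝ _ ⟨a, Set.mem_iUnion₂.2 ⟨f, hf, ha⟩, rfl⟩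

lemma Γ_subset_iff {S : Set R} {C : Set (Fin p → ℝ)} (hC : Convex ℝ C) :
    Γ x S ⊆ C ↔ ∀ f ∈ S, ∀ a ∈ supp x f, toR a ∈ C := by
  rw [Γ, hC.convexHull_subset_iff, Set.image_subset_iff, Set.iUnion₂_subset_iff]
  rfl

lemma convex_ΓI (x : Fin p → R) (I : Ideal R) : Convex ℝ (ΓI x I) := convex_convexHull ℝ _

variable [(Ideal.span (Set.range x)).IsPrime]

lemma ΓI_subset_ΓI_idealZero (hx : IsPermutablyRegular x) (I : Ideal R) :
    ΓI x I ⊆ ΓI x (idealZero x I) :=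
  (Γ_subset_iff (convex_ΓI x _)).2 fun f hf a ha => by
    have haI : toR a ∈ ΓI x I := toR_mem_Γ hf ha
    have hmem : mono x a ∈ idealZero x I := mono_mem_monomialIdeal haI
    exact toR_mem_Γ hmem (by simp [supp_mono hx])

variable [IsNoetherianRing (Localization.AtPrime (Ideal.span (Set.range x)))]

lemma map_le_monomialIdeal_ΓI (hx : IsPermutablyRegular x) (I : Ideal R) :
    I.map (algebraMap R (Localization.AtPrime (Ideal.span (Set.range x)))) ≤
      monomialIdeal (algebraMap R _ ∘ x) {a | toR a ∈ ΓI x I} := by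
  refine Ideal.map_le_iff_le_comap.2 fun f hf => ?_
  obtain ⟨B, hfB, hB, -⟩ := exists_supp_eq_and_isUnitMonRep hx f
  exact hB.mem_monomialIdeal fun b hb => toR_mem_Γ hf (by rwa [hfB])

lemma Γ_intClosure_subset_ΓI (hx : IsPermutablyRegular x) {I J : Ideal R}
    (hJ : J.map (algebraMap R (Localization.AtPrime (Ideal.span (Set.range x)))) ≤
      monomialIdeal (algebraMap R _ ∘ x) {a | toR a ∈ ΓI x I}) :
    Γ x (intClosure J) ⊆ ΓI x I := by
  refine (Γ_subset_iff (convex_ΓI x I)).2 fun f hf b hb => ?_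
  obtain ⟨B, hfB, hB, -⟩ := exists_supp_eq_and_isUnitMonRep hx f
  exact hB.toR_mem_convexHull_of_mem_intClosure (hx.isMonomiallyIndependent_algebraMap _)
    (isUpperSet_biUnion_supp hx I) hJ (map_mem_intClosure_map _ hf) (by rwa [hfB] at hb)

end NewtonPolyhedron

theorem newtonPolyhedron_eq_intClosure_eq_idealZero_general (x : Fin p → R)
    (hx : IsPermutablyRegular x) [(Ideal.span (Set.range x)).IsPrime]
    [IsNoetherianRing (Localization.AtPrime (Ideal.span (Set.range x)))] (I : Ideal R) :
    ΓI x I = Γ x (intClosure I) ∧ ΓI x I = ΓI x (idealZero x I) := by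
  have hI : Γ x (intClosure I) ⊆ ΓI x I := Γ_intClosure_subset_ΓI hx (map_le_monomialIdeal_ΓI hx I)
  have hI₀ : Γ x (intClosure (idealZero x I)) ⊆ ΓI x I :=
    Γ_intClosure_subset_ΓI hx (map_monomialIdeal _ x _).le
  exact ⟨(monotone_Γ x (subset_intClosure I)).antisymm hI,
    (ΓI_subset_ΓI_idealZero hx I).antisymm ((monotone_Γ x (subset_intClosure _)).trans hI₀)⟩

/-- `Γ_x(I) = Γ_x(I̅) = Γ_x(I₀)`. -/
theorem newtonPolyhedron_eq_intClosure_eq_idealZero {R : Type*} [CommRing R] {p : ℕ}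
    (x : Fin p → R) (hR : IsRegularDomain R) (hx : IsGRSOP x) (I : Ideal R) :
    ΓI x I = Γ x (intClosure I) ∧ ΓI x I = ΓI x (idealZero x I) := by
  have : IsDomain (R ⧸ Ideal.span (Set.range x)) := Set.image_univ (f := x) ▸ (hx.2 univ).1
  have hprime := (Ideal.Quotient.isDomain_iff_prime (Ideal.span (Set.range x))).1 this
  have := (hR.2 _ hprime).1
  exact newtonPolyhedron_eq_intClosure_eq_idealZero_general x (.of_forall_perm_isRegSeq hx.1) I

end NND
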